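/- Assume Condition (A1) and the standing assumptions. Then there exist constants H₆, α₆ > 0, depending only on the constants of (A1) and of the standing assumptions, such that for every θ ∈ Θ(K) the false non-discovery rate of the selector satisfies E_θ[ |I_*∖Î(K)| / (n − |Î(K)|) ] ≤ H₆·(n/(|I_*| ∨ 1))^{−α₆} (with the convention 0/0 := 0 when Î(K) = [n]). -/

import Mathlib

open MeasureTheory Finset
open scoped Classical

/-- `ell n k = k * log(q*n/k)` with `q = e^2`; equals `0` at `k = 0` by Lean's conventions. -/
noncomputable def ell (n k : ℕ) : ℝ := (k : ℝ) * Real.log (Real.exp 2 * n / k)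

/-- The selector `Î(K)`: empty if the preselector `Ĩ(K)` is empty, otherwise all coordinates
with `X_i² ≥ K σ² log(q n / |Ĩ(K)|)`, where `q = e²`. -/
noncomputable def ihat {n : ℕ} (K σ : ℝ) (Itil : (Fin n → ℝ) → Finset (Fin n))
    (x : Fin n → ℝ) : Finset (Fin n) :=
  if Itil x = ∅ then ∅
  else Finset.univ.filter fun i =>
    K * σ ^ 2 * Real.log (Real.exp 2 * (n : ℝ) / (Itil x).card) ≤ (x i) ^ 2

/-!
Let `I` minimize the penalized criterion for `θ`, with penalty constant `A`, and let
`L = log (e² n / |I|)`. Deleting one index from `I` shows that `θ i ^ 2 ≥ A σ² (L - 1)` on `I`,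
while adding one index to `Ĩ` shows that `Î ⊆ Ĩ`. Off the over-size and under-size events, first
`n - |Î| ≥ n / 2` (when `|I|` is a small fraction of `n`; otherwise the bound exceeds one), and
second a missed coordinate `i ∈ I \ Î` has `x i ^ 2 ≤ K σ² (L - log δ)`. Such a coordinate carries
noise `((x i - θ i) / σ) ^ 2` of order at least `(A / 6 - K / 2) L`, which has probability at most a
power of `|I| / n`. So the expected proportion of missed coordinates is of that order as well.
-/

/-- The logarithmic factor `log (e² n / k)` of `ell n k`, which also sets the threshold of the
selector `ihat`. -/
noncomputable def logLevel (n k : ℕ) : ℝ := Real.log (Real.exp 2 * n / k)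

section LogLevel

variable {n k : ℕ}

lemma ell_eq_mul_logLevel (n k : ℕ) : ell n k = k * logLevel n k := rfl

lemma logLevel_eq_two_add_log (hn : n ≠ 0) (hk : k ≠ 0) :
    logLevel n k = 2 + Real.log (n / k) := by
  rw [logLevel, mul_div_assoc, Real.log_mul (Real.exp_ne_zero 2) (by positivity), Real.log_exp]

lemma one_le_natCast_div (hk : 0 < k) (hkn : k ≤ n) : (1 : ℝ) ≤ n / k :=
  (one_le_div (by positivity)).2 (by exact_mod_cast hkn)

lemma two_le_logLevel (hk : 0 < k) (hkn : k ≤ n) : 2 ≤ logLevel n k := by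
  rw [logLevel_eq_two_add_log (by omega) hk.ne']
  linarith [Real.log_nonneg (one_le_natCast_div hk hkn)]

lemma logLevel_le_ell (hk : 0 < k) (hkn : k ≤ n) : logLevel n k ≤ ell n k :=
  le_mul_of_one_le_left (by linarith [two_le_logLevel hk hkn]) (by exact_mod_cast hk)

lemma logLevel_le_sub_log {m : ℕ} {δ : ℝ} (hn : n ≠ 0) (hk : 0 < k) (hδ : 0 < δ)
    (hm : δ * k ≤ m) : logLevel n m ≤ logLevel n k - Real.log δ := by
  have hδk : 0 < δ * k := by positivity
  rw [logLevel, logLevel, ← Real.log_div (by positivity) hδ.ne', div_div, mul_comm (k : ℝ)]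
  exact Real.log_le_log (div_pos (by positivity) (hδk.trans_le hm)) (by gcongr)

lemma exp_neg_mul_logLevel_le_rpow {a b : ℝ} (hk : 0 < k) (hkn : k ≤ n) (ha : 0 ≤ a)
    (hab : a ≤ b) : Real.exp (-b * logLevel n k) ≤ ((n : ℝ) / k) ^ (-a) := by
  have hρ := one_le_natCast_div hk hkn
  have hlog := Real.log_nonneg hρ
  rw [Real.rpow_def_of_pos (by linarith), logLevel_eq_two_add_log (by omega) hk.ne']
  exact Real.exp_le_exp.2 (by nlinarith)

lemma exp_neg_mul_ell_le_rpow {a b : ℝ} (hk : 0 < k) (hkn : k ≤ n) (ha : 0 ≤ a) (hab : a ≤ b) :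
    Real.exp (-b * ell n k) ≤ ((n : ℝ) / k) ^ (-a) := by
  refine le_trans (Real.exp_le_exp.2 ?_) (exp_neg_mul_logLevel_le_rpow hk hkn ha hab)
  exact mul_le_mul_of_nonpos_left (logLevel_le_ell hk hkn) (by linarith)

lemma logLevel_succ_sub_one_le_ell_succ_sub (hn : n ≠ 0) (k : ℕ) :
    logLevel n (k + 1) - 1 ≤ ell n (k + 1) - ell n k := by
  rcases k.eq_zero_or_pos with rfl | hk
  · simp [ell, logLevel]
  have hstep : (k : ℝ) * Real.log (((k + 1 : ℕ) : ℝ) / k) ≤ 1 := by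
    calc (k : ℝ) * Real.log (((k + 1 : ℕ) : ℝ) / k)
        ≤ k * (((k + 1 : ℕ) : ℝ) / k - 1) := by
          gcongr
          exact Real.log_le_sub_one_of_pos (by positivity)
      _ = 1 := by push_cast; field_simp; ring
  rw [Real.log_div (by positivity) (by positivity)] at hstep
  rw [ell, ell, logLevel, Real.log_div (by positivity) (by positivity),
    Real.log_div (by positivity) (by positivity)]
  push_cast at hstep ⊢
  linarith

lemma ell_succ_sub_lt_logLevel (hn : n ≠ 0) (hk : 0 < k) :
    ell n (k + 1) - ell n k < logLevel n k := by
  have hanti : logLevel n (k + 1) < logLevel n k :=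
    Real.log_lt_log (by positivity) (by gcongr; exact k.lt_succ_self)
  calc ell n (k + 1) - ell n k
      = (k + 1) * logLevel n (k + 1) - k * logLevel n k := by
        simp only [ell_eq_mul_logLevel, Nat.cast_succ]
    _ < (k + 1) * logLevel n k - k * logLevel n k := by gcongr
    _ = logLevel n k := by ring

end LogLevel

/-- `I` minimizes the penalized criterion `∑ i ∉ I, y i ^ 2 + τ ℓ(|I|)`. The preselector is such a
minimizer for the observation with `τ = K σ²`, and the active set for `θ` with `τ = A σ²`. -/
def IsPenalizedMinimizer {n : ℕ} (τ : ℝ) (y : Fin n → ℝ) (I : Finset (Fin n)) : Prop :=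
  ∀ J : Finset (Fin n), (∑ i ∈ Iᶜ, y i ^ 2) + τ * ell n I.card
    ≤ (∑ i ∈ Jᶜ, y i ^ 2) + τ * ell n J.card

section Minimizer

variable {n : ℕ} {τ : ℝ} {y : Fin n → ℝ} {I : Finset (Fin n)} {i : Fin n}

lemma IsPenalizedMinimizer.le_sq_of_mem (hI : IsPenalizedMinimizer τ y I) (hτ : 0 ≤ τ)
    (hi : i ∈ I) : τ * (logLevel n I.card - 1) ≤ y i ^ 2 := by
  have herase := hI (I.erase i)
  rw [compl_erase, sum_insert (by simpa using hi)] at herase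
  have hincr := logLevel_succ_sub_one_le_ell_succ_sub i.pos.ne' (I.erase i).card
  rw [card_erase_add_one hi] at hincr
  linarith [mul_le_mul_of_nonneg_left hincr hτ]

lemma IsPenalizedMinimizer.sq_lt_of_notMem (hI : IsPenalizedMinimizer τ y I) (hτ : 0 < τ)
    (hne : I.Nonempty) (hi : i ∉ I) : y i ^ 2 < τ * logLevel n I.card := by
  have hinsert := hI (insert i I)
  rw [card_insert_of_notMem hi, compl_insert] at hinsert
  have hsum := add_sum_erase Iᶜ (fun j => y j ^ 2) (mem_compl.2 hi)
  have hincr := ell_succ_sub_lt_logLevel i.pos.ne' hne.card_pos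
  linarith [mul_lt_mul_of_pos_left hincr hτ]

end Minimizer

section Selector

variable {n : ℕ} {K σ : ℝ} {Itil : (Fin n → ℝ) → Finset (Fin n)} {x : Fin n → ℝ}

lemma mem_ihat_iff (hne : (Itil x).Nonempty) {i : Fin n} :
    i ∈ ihat K σ Itil x ↔ K * σ ^ 2 * logLevel n (Itil x).card ≤ x i ^ 2 := by
  simp [ihat, hne.ne_empty, logLevel]

lemma ihat_subset (hτ : 0 < K * σ ^ 2) (h : IsPenalizedMinimizer (K * σ ^ 2) x (Itil x)) :
    ihat K σ Itil x ⊆ Itil x := by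
  rcases (Itil x).eq_empty_or_nonempty with hempty | hne
  · simp [ihat, hempty]
  intro i hi
  by_contra hni
  exact ((mem_ihat_iff hne).1 hi).not_gt (h.sq_lt_of_notMem hτ hne hni)

end Selector

lemma sub_le_noise_sq {A K σ L R x θ : ℝ} (hA : 0 ≤ A) (hσ : 0 < σ) (hL : 2 ≤ L)
    (hθ : A * σ ^ 2 * (L - 1) ≤ θ ^ 2) (hx : x ^ 2 ≤ K * σ ^ 2 * R) :
    A / 6 * L - K / 2 * R ≤ ((x - θ) / σ) ^ 2 := by
  have hsignal : A * σ ^ 2 * (L / 2) ≤ θ ^ 2 :=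
    le_trans (by gcongr; linarith) hθ
  -- `(u + v) ^ 2 ≤ p u ^ 2 + q v ^ 2` for `1 / p + 1 / q = 1`, with `p = 3 / 2` and `q = 3`
  have hsplit : θ ^ 2 ≤ 3 / 2 * x ^ 2 + 3 * (x - θ) ^ 2 := by
    linarith [sq_nonneg (3 * x - 2 * θ)]
  rw [div_pow, le_div_iff₀ (by positivity)]
  linarith

/-- The squared noise which a coordinate of an active set of size `k` must carry in order to be
missed by the selector, when the preselector has more than `δ k` elements. -/
noncomputable def missThreshold (K A δ : ℝ) (n k : ℕ) : ℝ :=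
  A / 6 * logLevel n k - K / 2 * (logLevel n k - Real.log δ)

lemma missThreshold_le_noise_sq {n : ℕ} {K A δ σ : ℝ} {θ x : Fin n → ℝ} {I : Finset (Fin n)}
    {Itil : (Fin n → ℝ) → Finset (Fin n)} (hK : 0 ≤ K) (hA : 0 ≤ A) (hδ : 0 < δ) (hσ : 0 < σ)
    (hI : IsPenalizedMinimizer (A * σ ^ 2) θ I) (hcard : δ * I.card < (Itil x).card)
    {i : Fin n} (hi : i ∈ I \ ihat K σ Itil x) :
    missThreshold K A δ n I.card ≤ ((x i - θ i) / σ) ^ 2 := by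
  obtain ⟨hiI, hmissed⟩ := mem_sdiff.1 hi
  have hIpos : 0 < I.card := card_pos.2 ⟨i, hiI⟩
  have hne : (Itil x).Nonempty := card_pos.1 <| by
    exact_mod_cast (show (0 : ℝ) ≤ δ * I.card by positivity).trans_lt hcard
  rw [mem_ihat_iff hne, not_le] at hmissed
  refine sub_le_noise_sq hA hσ (two_le_logLevel hIpos (by simpa using card_le_univ I))
    (hI.le_sq_of_mem (by positivity) hiI) (hmissed.le.trans ?_)
  gcongr
  exact logLevel_le_sub_log i.pos.ne' hIpos hδ hcard.le

/-- The false non-discovery proportion of the selection `J` when the active set is `I`. It is `0`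
at `J = univ`, since division by zero gives zero. -/
noncomputable def fndp {n : ℕ} (I J : Finset (Fin n)) : ℝ :=
  ((I \ J).card : ℝ) / ((n : ℝ) - (J.card : ℝ))

section FalseNonDiscovery

variable {n : ℕ} {I J : Finset (Fin n)}

lemma fndp_le_one (I J : Finset (Fin n)) : fndp I J ≤ 1 := by
  have hcard : ((I \ J).card : ℝ) + J.card ≤ n := by
    exact_mod_cast (card_sdiff_add_card I J).trans_le (by simpa using card_le_univ (I ∪ J))
  exact div_le_one_of_le₀ (by linarith) (by linarith [Nat.cast_nonneg (α := ℝ) (I \ J).card])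

lemma fndp_le_two_div_mul_card (hn : n ≠ 0) (hJ : (J.card : ℝ) ≤ n / 2) :
    fndp I J ≤ 2 / n * (I \ J).card := by
  calc fndp I J ≤ (I \ J).card / ((n : ℝ) / 2) := by
        unfold fndp
        gcongr
        linarith
    _ = 2 / n * (I \ J).card := by field_simp

end FalseNonDiscovery

lemma one_le_rpow_mul_rpow_neg {ρ b a : ℝ} (hρ : 0 < ρ) (hρb : ρ ≤ b) (ha : 0 ≤ a) :
    1 ≤ b ^ a * ρ ^ (-a) := by
  rw [Real.rpow_neg hρ.le, ← div_eq_mul_inv, one_le_div (by positivity)]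
  exact Real.rpow_le_rpow hρ.le hρb ha

section Measure

variable {Ω : Type*} [MeasurableSpace Ω] {μ : Measure Ω}

lemma lintegral_le_measure_add_lintegral {f g : Ω → ENNReal} {s : Set Ω} (hf : ∀ x, f x ≤ 1)
    (hfg : ∀ x ∉ s, f x ≤ g x) : ∫⁻ x, f x ∂μ ≤ μ s + ∫⁻ x, g x ∂μ := by
  set t := toMeasurable μ s
  have ht : MeasurableSet t := measurableSet_toMeasurable μ s
  calc ∫⁻ x, f x ∂μ = ∫⁻ x in t, f x ∂μ + ∫⁻ x in tᶜ, f x ∂μ := (lintegral_add_compl f ht).symm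
    _ ≤ ∫⁻ _ in t, 1 ∂μ + ∫⁻ x in tᶜ, g x ∂μ :=
        add_le_add (lintegral_mono hf) <| setLIntegral_mono' ht.compl fun x hx =>
          hfg x fun hxs => hx (subset_toMeasurable μ s hxs)
    _ ≤ μ s + ∫⁻ x, g x ∂μ := by
        rw [setLIntegral_one, measure_toMeasurable]
        exact add_le_add le_rfl (setLIntegral_le_lintegral _ _)

lemma lintegral_card_filter {ι : Type*} (S : Finset ι) {p : ι → Ω → Prop}
    (hp : ∀ i, MeasurableSet {x | p i x}) :
    ∫⁻ x, (#{i ∈ S | p i x} : ENNReal) ∂μ = ∑ i ∈ S, μ {x | p i x} := by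
  calc ∫⁻ x, (#{i ∈ S | p i x} : ENNReal) ∂μ
      = ∫⁻ x, ∑ i ∈ S, {y | p i y}.indicator 1 x ∂μ := by
        simp only [card_filter, Nat.cast_sum, Nat.cast_ite, Nat.cast_one, Nat.cast_zero,
          Set.indicator_apply, Set.mem_ofPred_eq, Pi.one_apply]
    _ = ∑ i ∈ S, μ {x | p i x} := by
        rw [lintegral_finsetSum S fun i _ => measurable_one.indicator (hp i)]
        exact sum_congr rfl fun i _ => lintegral_indicator_one (hp i)

lemma measure_le_ofReal_exp_of_tail [IsProbabilityMeasure μ] {f : Ω → ℝ} {C H α : ℝ}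
    (hα : 0 ≤ α)
    (htail : ∀ M, 0 ≤ M → μ {x | C + M ≤ f x} ≤ ENNReal.ofReal (H * Real.exp (-α * M))) (t : ℝ) :
    μ {x | t ≤ f x} ≤ ENNReal.ofReal (max H 1 * Real.exp (-α * (t - C))) := by
  rcases le_total C t with hCt | htC
  · calc μ {x | t ≤ f x} = μ {x | C + (t - C) ≤ f x} := by rw [add_sub_cancel]
      _ ≤ ENNReal.ofReal (H * Real.exp (-α * (t - C))) := htail _ (sub_nonneg.2 hCt)
      _ ≤ ENNReal.ofReal (max H 1 * Real.exp (-α * (t - C))) := by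
        gcongr
        exact le_max_left _ _
  · refine prob_le_one.trans (ENNReal.one_le_ofReal.2 ?_)
    exact one_le_mul_of_one_le_of_one_le (le_max_right _ _) (Real.one_le_exp (by nlinarith))

lemma measure_missThreshold_le [IsProbabilityMeasure μ] {f : Ω → ℝ} {C H α K A δ a : ℝ}
    {n k : ℕ} (hα : 0 ≤ α) (ha : 0 ≤ a) (haα : a ≤ α * (A / 6 - K / 2)) (hk : 0 < k)
    (hkn : k ≤ n)
    (htail : ∀ M, 0 ≤ M → μ {x | C + M ≤ f x} ≤ ENNReal.ofReal (H * Real.exp (-α * M))) :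
    μ {x | missThreshold K A δ n k ≤ f x} ≤ ENNReal.ofReal
      (max H 1 * Real.exp (α * (C - K / 2 * Real.log δ)) * ((n : ℝ) / k) ^ (-a)) := by
  refine (measure_le_ofReal_exp_of_tail hα htail _).trans (ENNReal.ofReal_le_ofReal ?_)
  have hexp : Real.exp (-α * (missThreshold K A δ n k - C)) =
      Real.exp (α * (C - K / 2 * Real.log δ)) *
        Real.exp (-(α * (A / 6 - K / 2)) * logLevel n k) := by
    rw [← Real.exp_add, missThreshold]
    congr 1
    ring
  rw [hexp, ← mul_assoc]
  gcongr
  exact exp_neg_mul_logLevel_le_rpow hk hkn ha haα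

end Measure

section Rate

variable {n : ℕ} {σ K A M₁ δ : ℝ} {θ : Fin n → ℝ} {μ : Measure (Fin n → ℝ)}
  {Itil : (Fin n → ℝ) → Finset (Fin n)} {I : Finset (Fin n)}

lemma lintegral_fndp_le_one [IsProbabilityMeasure μ] (J : (Fin n → ℝ) → Finset (Fin n)) :
    ∫⁻ x, ENNReal.ofReal (fndp I (J x)) ∂μ ≤ 1 := by
  calc ∫⁻ x, ENNReal.ofReal (fndp I (J x)) ∂μ ≤ ∫⁻ _, 1 ∂μ :=
        lintegral_mono fun x => ENNReal.ofReal_le_one.2 (fndp_le_one I (J x))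
    _ = 1 := by simp

lemma fndp_ihat_le (hn : n ≠ 0) (hσ : 0 < σ) (hK : 0 < K) (hA : 0 ≤ A) (hδ : 0 < δ)
    (hI : IsPenalizedMinimizer (A * σ ^ 2) θ I) {x : Fin n → ℝ}
    (hItil : IsPenalizedMinimizer (K * σ ^ 2) x (Itil x)) (hupper : ((Itil x).card : ℝ) ≤ n / 2)
    (hlower : δ * I.card < (Itil x).card) :
    fndp I (ihat K σ Itil x) ≤
      2 / n * #{i ∈ I | missThreshold K A δ n I.card ≤ ((x i - θ i) / σ) ^ 2} := by
  have hihat : ((ihat K σ Itil x).card : ℝ) ≤ (Itil x).card := by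
    exact_mod_cast card_le_card (ihat_subset (by positivity) hItil)
  refine (fndp_le_two_div_mul_card hn (hihat.trans hupper)).trans ?_
  gcongr
  exact fun i hi => mem_filter.2 ⟨(mem_sdiff.1 hi).1,
    missThreshold_le_noise_sq hK.le hA hδ hσ hI hlower hi⟩

lemma lintegral_fndp_ihat_le (hn : n ≠ 0) (hσ : 0 < σ) (hK : 0 < K) (hA : 0 ≤ A) (hδ : 0 < δ)
    (hI : IsPenalizedMinimizer (A * σ ^ 2) θ I)
    (hItil : ∀ x, IsPenalizedMinimizer (K * σ ^ 2) x (Itil x))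
    (hsmall : 2 * M₁ * I.card ≤ n) :
    ∫⁻ x, ENNReal.ofReal (fndp I (ihat K σ Itil x)) ∂μ ≤
      μ {x | M₁ * I.card ≤ ((Itil x).card : ℝ)} + μ {x | ((Itil x).card : ℝ) ≤ δ * I.card} +
        ENNReal.ofReal (2 / n) *
          ∑ i ∈ I, μ {x | missThreshold K A δ n I.card ≤ ((x i - θ i) / σ) ^ 2} := by
  set oversize := {x | M₁ * I.card ≤ ((Itil x).card : ℝ)} with hover
  set undersize := {x | ((Itil x).card : ℝ) ≤ δ * I.card} with hunder
  have hpointwise : ∀ x ∉ oversize ∪ undersize, ENNReal.ofReal (fndp I (ihat K σ Itil x)) ≤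
      ENNReal.ofReal (2 / n) *
        (#{i ∈ I | missThreshold K A δ n I.card ≤ ((x i - θ i) / σ) ^ 2} : ENNReal) := by
    intro x hx
    simp only [hover, hunder, Set.mem_union, Set.mem_ofPred_eq, not_or, not_le] at hx
    rw [← ENNReal.ofReal_natCast, ← ENNReal.ofReal_mul (by positivity)]
    exact ENNReal.ofReal_le_ofReal
      (fndp_ihat_le hn hσ hK hA hδ hI (hItil x) (by linarith [hx.1]) hx.2)
  refine (lintegral_le_measure_add_lintegral
    (fun x => ENNReal.ofReal_le_one.2 (fndp_le_one _ _)) hpointwise).trans ?_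
  rw [lintegral_const_mul' _ _ ENNReal.ofReal_ne_top, lintegral_card_filter I fun i =>
    measurableSet_le measurable_const (by fun_prop)]
  gcongr
  exact measure_union_le oversize undersize

lemma lintegral_fndp_ihat_le_of_small [IsProbabilityMeasure μ] {C H α α₀ α₁ H₀ a : ℝ}
    (hσ : 0 < σ) (hα : 0 ≤ α) (hK : 0 < K) (hA : 0 ≤ A) (hδ : 0 < δ) (hH₀ : 0 ≤ H₀)
    (ha : 0 ≤ a) (ha₀ : a ≤ α₀) (ha₁ : a ≤ α₁) (haα : a ≤ α * (A / 6 - K / 2))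
    (htail : ∀ (i : Fin n) (M : ℝ), 0 ≤ M →
      μ {x | C + M ≤ ((x i - θ i) / σ) ^ 2} ≤ ENNReal.ofReal (H * Real.exp (-α * M)))
    (hItil : ∀ x, IsPenalizedMinimizer (K * σ ^ 2) x (Itil x))
    (hI : IsPenalizedMinimizer (A * σ ^ 2) θ I)
    (hover : μ {x | M₁ * I.card ≤ ((Itil x).card : ℝ)} ≤
      ENNReal.ofReal (H₀ * Real.exp (-α₀ * ell n I.card)))
    (hunder : μ {x | ((Itil x).card : ℝ) ≤ δ * I.card} ≤
      ENNReal.ofReal (H₀ * Real.exp (-α₁ * ell n I.card)))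
    (hne : I.Nonempty) (hsmall : 2 * M₁ * I.card ≤ n) :
    ∫⁻ x, ENNReal.ofReal (fndp I (ihat K σ Itil x)) ∂μ ≤ ENNReal.ofReal
      ((2 * H₀ + 2 * (max H 1 * Real.exp (α * (C - K / 2 * Real.log δ)))) *
        ((n : ℝ) / I.card) ^ (-a)) := by
  have hk : 0 < I.card := hne.card_pos
  have hkn : I.card ≤ n := by simpa using card_le_univ I
  set D := max H 1 * Real.exp (α * (C - K / 2 * Real.log δ))
  set r := ((n : ℝ) / I.card) ^ (-a)
  have : 0 ≤ D := by positivity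
  have : 0 ≤ r := by positivity
  calc ∫⁻ x, ENNReal.ofReal (fndp I (ihat K σ Itil x)) ∂μ
      ≤ _ := lintegral_fndp_ihat_le (by omega) hσ hK hA hδ hI hItil hsmall
    _ ≤ ENNReal.ofReal (H₀ * r) + ENNReal.ofReal (H₀ * r) +
          ENNReal.ofReal (2 / n) * ∑ _i ∈ I, ENNReal.ofReal (D * r) := by
        gcongr with i
        · exact hover.trans (by gcongr; exact exp_neg_mul_ell_le_rpow hk hkn ha ha₀)
        · exact hunder.trans (by gcongr; exact exp_neg_mul_ell_le_rpow hk hkn ha ha₁)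
        · exact measure_missThreshold_le hα ha haα hk hkn (htail i)
    _ = ENNReal.ofReal (H₀ * r + H₀ * r + 2 / n * (I.card * (D * r))) := by
        rw [sum_const, nsmul_eq_mul, ← ENNReal.ofReal_natCast,
          ← ENNReal.ofReal_mul (by positivity), ← ENNReal.ofReal_mul (by positivity),
          ← ENNReal.ofReal_add (by positivity) (by positivity),
          ← ENNReal.ofReal_add (by positivity) (by positivity)]
    _ ≤ ENNReal.ofReal ((2 * H₀ + 2 * D) * r) := by
        refine ENNReal.ofReal_le_ofReal ?_
        have hfraction : (I.card : ℝ) / n ≤ 1 := div_le_one_of_le₀ (by exact_mod_cast hkn) (by simp)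
        calc H₀ * r + H₀ * r + 2 / n * (I.card * (D * r))
            = 2 * (H₀ * r) + 2 * (I.card / n * (D * r)) := by ring
          _ ≤ 2 * (H₀ * r) + 2 * (1 * (D * r)) := by gcongr
          _ = (2 * H₀ + 2 * D) * r := by ring

lemma lintegral_fndp_ihat_le_rpow [IsProbabilityMeasure μ] {C H α α₀ α₁ H₀ a : ℝ} (hσ : 0 < σ)
    (hα : 0 ≤ α) (hK : 0 < K) (hA : 0 ≤ A) (hM₁ : 0 ≤ M₁) (hδ : 0 < δ) (hH₀ : 0 ≤ H₀)
    (ha : 0 ≤ a) (ha₀ : a ≤ α₀) (ha₁ : a ≤ α₁) (haα : a ≤ α * (A / 6 - K / 2))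
    (htail : ∀ (i : Fin n) (M : ℝ), 0 ≤ M →
      μ {x | C + M ≤ ((x i - θ i) / σ) ^ 2} ≤ ENNReal.ofReal (H * Real.exp (-α * M)))
    (hItil : ∀ x, IsPenalizedMinimizer (K * σ ^ 2) x (Itil x))
    (hI : IsPenalizedMinimizer (A * σ ^ 2) θ I)
    (hover : μ {x | M₁ * I.card ≤ ((Itil x).card : ℝ)} ≤
      ENNReal.ofReal (H₀ * Real.exp (-α₀ * ell n I.card)))
    (hunder : μ {x | ((Itil x).card : ℝ) ≤ δ * I.card} ≤
      ENNReal.ofReal (H₀ * Real.exp (-α₁ * ell n I.card))) :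
    ∫⁻ x, ENNReal.ofReal (fndp I (ihat K σ Itil x)) ∂μ ≤ ENNReal.ofReal
      ((2 * H₀ + 2 * (max H 1 * Real.exp (α * (C - K / 2 * Real.log δ))) + (2 * M₁) ^ a) *
        ((n : ℝ) / ↑(max I.card 1)) ^ (-a)) := by
  rcases I.eq_empty_or_nonempty with hempty | hne
  · simp [fndp, hempty]
  have hk : 0 < I.card := hne.card_pos
  have hn : 0 < n := hk.trans_le (by simpa using card_le_univ I)
  rw [max_eq_left (Nat.succ_le_of_lt hk), add_mul]
  rcases le_or_gt (2 * M₁ * I.card) n with hsmall | hlarge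
  · exact (lintegral_fndp_ihat_le_of_small hσ hα hK hA hδ hH₀ ha ha₀ ha₁ haα htail hItil hI hover
      hunder hne hsmall).trans (ENNReal.ofReal_le_ofReal (le_add_of_nonneg_right (by positivity)))
  · have hρ : (n : ℝ) / I.card ≤ 2 * M₁ := (div_le_iff₀ (by positivity)).2 hlarge.le
    refine (lintegral_fndp_le_one _).trans (ENNReal.one_le_ofReal.2 ?_)
    exact (one_le_rpow_mul_rpow_neg (by positivity) hρ ha).trans
      (le_add_of_nonneg_left (by positivity))

end Rate

theorem stmt_11_general {C H α K A α₀ α₁ M₁ δ H₀ : ℝ} (hα : 0 < α) (hK : 0 < K)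
    (hα₀ : 0 < α₀) (hα₁ : 0 < α₁) (hM₁ : 0 ≤ M₁) (hδ : 0 < δ) (hH₀ : 0 ≤ H₀)
    (hKA : K / 2 < A / 6) :
    ∃ H₆ α₆ : ℝ, 0 < H₆ ∧ 0 < α₆ ∧
      ∀ (n : ℕ) (σ : ℝ), 0 < σ →
        ∀ (θ : Fin n → ℝ) (μ : Measure (Fin n → ℝ)), IsProbabilityMeasure μ →
          (∀ (i : Fin n) (M : ℝ), 0 ≤ M →
            μ {x | C + M ≤ ((x i - θ i) / σ) ^ 2} ≤ ENNReal.ofReal (H * Real.exp (-α * M))) →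
          ∀ Itil : (Fin n → ℝ) → Finset (Fin n),
            (∀ x, IsPenalizedMinimizer (K * σ ^ 2) x (Itil x)) →
            ∀ I : Finset (Fin n), IsPenalizedMinimizer (A * σ ^ 2) θ I →
              μ {x | M₁ * I.card ≤ ((Itil x).card : ℝ)} ≤
                ENNReal.ofReal (H₀ * Real.exp (-α₀ * ell n I.card)) →
              μ {x | ((Itil x).card : ℝ) ≤ δ * I.card} ≤
                ENNReal.ofReal (H₀ * Real.exp (-α₁ * ell n I.card)) →
              ∫⁻ x, ENNReal.ofReal (fndp I (ihat K σ Itil x)) ∂μ ≤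
                ENNReal.ofReal (H₆ * ((n : ℝ) / ↑(max I.card 1)) ^ (-α₆)) := by
  set a := min (min α₀ α₁) (α * (A / 6 - K / 2))
  have ha : 0 < a := lt_min (lt_min hα₀ hα₁) (mul_pos hα (sub_pos.2 hKA))
  refine ⟨2 * H₀ + 2 * (max H 1 * Real.exp (α * (C - K / 2 * Real.log δ))) + (2 * M₁) ^ a, a,
    by positivity, ha, ?_⟩
  intro n σ hσ θ μ _ htail Itil hItil I hI hover hunder
  exact lintegral_fndp_ihat_le_rpow hσ hα.le hK (by linarith) hM₁ hδ hH₀ ha.le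
    ((min_le_left _ _).trans (min_le_left _ _)) ((min_le_left _ _).trans (min_le_right _ _))
    (min_le_right _ _) htail hItil hI hover hunder

theorem stmt_11 (Cξ Hξ αξ : ℝ) (hCξ : 0 < Cξ) (hHξ : 0 < Hξ) (hαξ : 0 < αξ)
    (K A₀ A₁ α₀ α₁' M₁ δ : ℝ)
    (hK : 0 < K) (hA₀ : 0 < A₀) (hA₁ : 0 < A₁) (hα₀ : 0 < α₀) (hα₁' : 0 < α₁')
    (hM₁ : 1 < M₁) (hδ : 0 < δ) (hδ1 : δ < 1) (hA01 : A₀ ≤ A₁)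
    (hKC : A₀ + Cξ < K / 2)
    (hA1big : K / 2 + αξ⁻¹ * ((Cξ * αξ + 2) / 2 + 1) < A₁ / 6) :
    ∃ H₆ α₆ : ℝ, 0 < H₆ ∧ 0 < α₆ ∧
      ∀ (n : ℕ) (σ : ℝ), 0 < σ →
        ∀ P : (Fin n → ℝ) → Measure (Fin n → ℝ),
          (∀ θ, IsProbabilityMeasure (P θ)) →
          (∀ (θ : Fin n → ℝ) (I : Finset (Fin n)) (M : ℝ), 0 ≤ M →
              P θ {x | Cξ * I.card + M ≤ ∑ i ∈ I, ((x i - θ i) / σ) ^ 2}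
                ≤ ENNReal.ofReal (Hξ * Real.exp (-αξ * M))) →
          ∀ Itil : (Fin n → ℝ) → Finset (Fin n),
            (∀ (x : Fin n → ℝ) (I : Finset (Fin n)),
                (∑ i ∈ (Itil x)ᶜ, x i ^ 2) + K * σ ^ 2 * ell n (Itil x).card
                  ≤ (∑ i ∈ Iᶜ, x i ^ 2) + K * σ ^ 2 * ell n I.card) →
            ∀ Istar : ℝ → (Fin n → ℝ) → Finset (Fin n),
              (∀ (A : ℝ) (θ : Fin n → ℝ), 0 < A → ∀ I : Finset (Fin n),
                  (∑ i ∈ (Istar A θ)ᶜ, θ i ^ 2) + A * σ ^ 2 * ell n (Istar A θ).card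
                    ≤ (∑ i ∈ Iᶜ, θ i ^ 2) + A * σ ^ 2 * ell n I.card) →
              (∀ (θ : Fin n → ℝ) (M : ℝ), 0 ≤ M →
                  P θ {x | M₁ * (Istar A₀ θ).card + M ≤ ((Itil x).card : ℝ)}
                    ≤ ENNReal.ofReal (Hξ / (1 - Real.exp (-1)) *
                        Real.exp (-α₀ * ell n (Istar A₀ θ).card - α₀ * M / 2))) →
              (∀ θ : Fin n → ℝ,
                  P θ {x | ((Itil x).card : ℝ) ≤ δ * (Istar A₁ θ).card}
                    ≤ ENNReal.ofReal (Hξ / (1 - Real.exp (-1)) *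
                        Real.exp (-α₁' * ell n (Istar A₁ θ).card))) →
              ∀ θ : Fin n → ℝ, Istar A₁ θ = Istar A₀ θ →
                (∫⁻ x, ENNReal.ofReal
                    (((Istar A₁ θ \ ihat K σ Itil x).card : ℝ) /
                      ((n : ℝ) - ((ihat K σ Itil x).card : ℝ))) ∂(P θ))
                  ≤ ENNReal.ofReal
                      (H₆ * ((n : ℝ) / (↑(max (Istar A₁ θ).card 1))) ^ (-α₆)) := by
  obtain ⟨H₆, α₆, hH₆, hα₆, hbound⟩ := stmt_11_general (C := Cξ) (H := Hξ) hαξ hK hα₀ hα₁'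
    (zero_le_one.trans hM₁.le) hδ (H₀ := Hξ / (1 - Real.exp (-1))) (div_nonneg hHξ.le (by simp))
    ((lt_add_of_pos_right _ (by positivity)).trans hA1big)
  refine ⟨H₆, α₆, hH₆, hα₆, fun n σ hσ P hP htail Itil hItil Istar hIstar hover hunder θ hθ => ?_⟩
  exact hbound n σ hσ θ (P θ) (hP θ) (fun i M hM => by simpa using htail θ {i} M hM) Itil hItil
    (Istar A₁ θ) (hIstar A₁ θ hA₁)
    (by simpa only [hθ, add_zero, mul_zero, zero_div, sub_zero] using hover θ 0 le_rfl)
    (hunder θ)
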